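/- Let L ≥ 1 and M ≥ 1 be integers and z_1,…,z_L ∈ ℝ; set m¹ = (1/L)∑ z_l, m² = (1/L)∑ z_l², b = M + 2 + √M·m¹, c = m² + √M·m¹ − 1, and define θ̂ = (1/2)·max(0, √(b² + 4c) − b). Then θ̂ maximizes the local log-likelihood ℓ over the half-line [0,∞): for every θ ≥ 0, ℓ(θ) ≤ ℓ(θ̂), where ℓ(θ) = −L·log(1+θ) − (1/2)·∑_{l=1}^L ((z_l − √M·θ)/(1+θ))². -/

import Mathlib

/-!
In the scale `τ = 1 + θ` the shifted observations `y = z + √M` are samples of `N(√M τ, τ²)`, and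
the log-likelihood is a concave function of `1 / τ`: a logarithm minus a quadratic with nonnegative
leading coefficient. Its derivative has the sign of a quadratic in `τ` with at most one positive
root, so for `0 < r` the maximum over `r ≤ τ` is at that root if it exceeds `r`, and at `r`
otherwise.
-/

open Finset Set
open scoped BigOperators

section ScaleModel

/-- The mean log-likelihood, up to an additive constant, of a sample `y` from `N(s τ, τ²)`, as a
function of the scale `τ`. It depends on the sample only through `p`, the mean of `y²`, and `q`,
`s` times the mean of `y`. -/
noncomputable def scaleLogLik (p q τ : ℝ) : ℝ :=
  -Real.log τ - p / 2 * τ⁻¹ ^ 2 + q * τ⁻¹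

/-- The larger root of `τ ^ 2 + q * τ - p`, the stationarity equation of `scaleLogLik p q`. -/
noncomputable def scaleRoot (p q : ℝ) : ℝ :=
  (√(q ^ 2 + 4 * p) - q) / 2

variable {p q r σ τ : ℝ}

theorem scaleLogLik_le_add_tangent (hp : 0 ≤ p) (hσ : 0 < σ) (hτ : 0 < τ) :
    scaleLogLik p q τ ≤ scaleLogLik p q σ + (τ⁻¹ - σ⁻¹) * (σ + q - p * σ⁻¹) := by
  have hlog : Real.log σ - Real.log τ ≤ σ * τ⁻¹ - 1 := by
    rw [← Real.log_div hσ.ne' hτ.ne', ← div_eq_mul_inv]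
    exact Real.log_le_sub_one_of_pos (div_pos hσ hτ)
  have hquad : 0 ≤ p * (τ⁻¹ - σ⁻¹) ^ 2 := mul_nonneg hp (sq_nonneg _)
  have hcancel : σ * σ⁻¹ = 1 := mul_inv_cancel₀ hσ.ne'
  unfold scaleLogLik
  linarith

theorem sub_scaleRoot_mul_add (hp : 0 ≤ p) :
    (τ - scaleRoot p q) * (τ + (scaleRoot p q + q)) = τ ^ 2 + q * τ - p := by
  have hsq : √(q ^ 2 + 4 * p) ^ 2 = q ^ 2 + 4 * p := Real.sq_sqrt (by positivity)
  unfold scaleRoot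
  linear_combination -hsq / 4

theorem scaleRoot_add_nonneg (hp : 0 ≤ p) : 0 ≤ scaleRoot p q + q := by
  have hsqrt : -q ≤ √(q ^ 2 + 4 * p) := Real.le_sqrt_of_sq_le (by linarith [neg_sq q])
  unfold scaleRoot
  linarith

theorem isMaxOn_scaleLogLik (hp : 0 ≤ p) (hr : 0 < r) :
    IsMaxOn (scaleLogLik p q) (Ici r) (max r (scaleRoot p q)) := by
  refine isMaxOn_iff.2 fun τ (hτ : r ≤ τ) ↦ ?_
  set σ := max r (scaleRoot p q)
  have hσ : 0 < σ := lt_max_of_lt_left hr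
  have hslope : σ + q - p * σ⁻¹ =
      (σ - scaleRoot p q) * ((σ + (scaleRoot p q + q)) * σ⁻¹) := by
    rw [← mul_assoc, sub_scaleRoot_mul_add hp]
    field_simp
  have hfactor : 0 ≤ (σ + (scaleRoot p q + q)) * σ⁻¹ := by
    have := scaleRoot_add_nonneg (q := q) hp
    positivity
  have hsign : (τ⁻¹ - σ⁻¹) * (σ - scaleRoot p q) ≤ 0 := by
    rcases le_total (scaleRoot p q) r with hroot | hroot
    · have hσr : σ = r := max_eq_left hroot
      rw [hσr]
      exact mul_nonpos_of_nonpos_of_nonneg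
        (sub_nonpos.2 (inv_anti₀ hr hτ)) (sub_nonneg.2 hroot)
    · have hσroot : σ = scaleRoot p q := max_eq_right hroot
      rw [hσroot, sub_self, mul_zero]
  have htangent := scaleLogLik_le_add_tangent (q := q) hp hσ (hr.trans_le hτ)
  rw [hslope, ← mul_assoc] at htangent
  exact htangent.trans (add_le_of_nonpos_right (mul_nonpos_of_nonpos_of_nonneg hsign hfactor))

end ScaleModel

section Sample

variable {ι : Type*} [Fintype ι] [Nonempty ι]

theorem expect_add_const_sq (s : ℝ) (z : ι → ℝ) :
    𝔼 i, (z i + s) ^ 2 = 𝔼 i, z i ^ 2 + 2 * s * 𝔼 i, z i + s ^ 2 := by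
  calc 𝔼 i, (z i + s) ^ 2 = 𝔼 i, (z i ^ 2 + 2 * s * z i + s ^ 2) := by
        congr! 2; ring
    _ = _ := by
        rw [expect_add_distrib, expect_add_distrib, ← mul_expect, Fintype.expect_const]

theorem sample_logLik_eq (s : ℝ) (y : ι → ℝ) {τ : ℝ} (hτ : τ ≠ 0) :
    -(Fintype.card ι : ℝ) * Real.log τ - 1 / 2 * ∑ i, ((y i - s * τ) / τ) ^ 2 =
      Fintype.card ι * (scaleLogLik (𝔼 i, y i ^ 2) (s * 𝔼 i, y i) τ - s ^ 2 / 2) := by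
  have hmean : 𝔼 i, ((y i - s * τ) / τ) ^ 2 =
      (𝔼 i, y i ^ 2) * τ⁻¹ ^ 2 - 2 * (s * 𝔼 i, y i) * τ⁻¹ + s ^ 2 := by
    calc 𝔼 i, ((y i - s * τ) / τ) ^ 2 = 𝔼 i, (y i * τ⁻¹ + -s) ^ 2 := by
          congr! 2; field_simp; ring
      _ = _ := by
          simp only [expect_add_const_sq, mul_pow, ← expect_mul]
          ring
  rw [← Fintype.card_mul_expect, hmean, scaleLogLik]
  ring

theorem isMaxOn_sample_logLik (s : ℝ) (y : ι → ℝ) {r : ℝ} (hr : 0 < r) :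
    IsMaxOn (fun τ ↦ -(Fintype.card ι : ℝ) * Real.log τ - 1 / 2 * ∑ i, ((y i - s * τ) / τ) ^ 2)
      (Ici r) (max r (scaleRoot (𝔼 i, y i ^ 2) (s * 𝔼 i, y i))) := by
  have hmax : IsMaxOn (scaleLogLik (𝔼 i, y i ^ 2) (s * 𝔼 i, y i)) (Ici r) _ :=
    isMaxOn_scaleLogLik (expect_nonneg fun i _ ↦ sq_nonneg (y i)) hr
  refine isMaxOn_iff.2 fun τ (hτ : r ≤ τ) ↦ ?_
  rw [sample_logLik_eq s y (hr.trans_le hτ).ne',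
    sample_logLik_eq s y (lt_max_of_lt_left hr).ne']
  gcongr
  exact isMaxOn_iff.1 hmax τ hτ

end Sample

theorem local_mle_closed_form_general {ι : Type*} [Fintype ι] [Nonempty ι] (s : ℝ) (z : ι → ℝ)
    {m1 m2 b c θ₀ : ℝ} (hθ₀ : -1 < θ₀)
    (hm1 : m1 = 𝔼 i, z i) (hm2 : m2 = 𝔼 i, z i ^ 2)
    (hb : b = s ^ 2 + 2 + s * m1) (hc : c = m2 + s * m1 - 1) :
    IsMaxOn (fun θ ↦ -(Fintype.card ι : ℝ) * Real.log (1 + θ) -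
        1 / 2 * ∑ i, ((z i - s * θ) / (1 + θ)) ^ 2)
      (Ici θ₀) (max θ₀ ((√(b ^ 2 + 4 * c) - b) / 2)) := by
  have hmean : 𝔼 i, (z i + s) = m1 + s := by
    rw [expect_add_distrib, Fintype.expect_const, hm1]
  have hroot : 1 + (√(b ^ 2 + 4 * c) - b) / 2 =
      scaleRoot (𝔼 i, (z i + s) ^ 2) (s * 𝔼 i, (z i + s)) := by
    rw [scaleRoot, expect_add_const_sq, hmean, ← hm1, ← hm2, hb, hc]
    ring_nf
  have hshift (i : ι) (θ : ℝ) : z i - s * θ = z i + s - s * (1 + θ) := by ring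
  have hmax := isMaxOn_sample_logLik s (fun i ↦ z i + s) (neg_lt_iff_pos_add'.1 hθ₀)
  refine isMaxOn_iff.2 fun θ (hθ : θ₀ ≤ θ) ↦ ?_
  simp only [hshift]
  rw [← max_add_add_left, hroot]
  exact isMaxOn_iff.1 hmax (1 + θ) (add_le_add_right hθ 1)

theorem local_mle_closed_form (L M : ℕ) (hL : 1 ≤ L) (hM : 1 ≤ M) (z : Fin L → ℝ)
    (m1 m2 b c θhat : ℝ)
    (hm1 : m1 = (1 / (L : ℝ)) * ∑ l, z l)
    (hm2 : m2 = (1 / (L : ℝ)) * ∑ l, (z l) ^ 2)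
    (hb : b = (M : ℝ) + 2 + Real.sqrt M * m1)
    (hc : c = m2 + Real.sqrt M * m1 - 1)
    (hθ : θhat = (1 / 2) * max 0 (Real.sqrt (b ^ 2 + 4 * c) - b)) :
    ∀ θ : ℝ, 0 ≤ θ →
      -(L : ℝ) * Real.log (1 + θ) -
          (1 / 2) * ∑ l, ((z l - Real.sqrt M * θ) / (1 + θ)) ^ 2 ≤
        -(L : ℝ) * Real.log (1 + θhat) -
          (1 / 2) * ∑ l, ((z l - Real.sqrt M * θhat) / (1 + θhat)) ^ 2 := by
  have : NeZero L := ⟨by lia⟩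
  have hmean (f : Fin L → ℝ) : 1 / (L : ℝ) * ∑ l, f l = 𝔼 l, f l := by
    rw [Fintype.expect_eq_sum_div_card, Fintype.card_fin, one_div_mul_eq_div]
  have hM_sq : √(M : ℝ) ^ 2 = M := Real.sq_sqrt M.cast_nonneg
  rw [mul_max_of_nonneg _ _ one_half_pos.le, mul_zero, one_div_mul_eq_div] at hθ
  have hmax := local_mle_closed_form_general √M z neg_one_lt_zero
    (hm1.trans (hmean _)) (hm2.trans (hmean _)) (hb.trans (by rw [hM_sq])) hc
  rw [← hθ, Fintype.card_fin] at hmax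
  exact isMaxOn_iff.1 hmax
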